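/- Let θ > 1. There exists a constant C, depending only on θ, such that for every Schwartz vector field v = (v¹, v²) : ℝ² → ℝ² with div v = 0 and vorticity ω = ∂₁v² − ∂₂v¹, one has ‖∇v‖_{L^∞} ≤ C · ‖v‖_{L²}^{(θ−1)/(θ+1)} · [ω]_θ^{2/(θ+1)}, where ‖∇v‖_{L^∞} is the supremum over x of the norm of the Jacobian matrix of v. -/

import Mathlib

open MeasureTheory ENNReal
open scoped RealInnerProductSpace

noncomputable section

/-- Shorthand for Euclidean space `ℝ^d`. -/
abbrev Ed (d : ℕ) := EuclideanSpace ℝ (Fin d)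

/-- The homogeneous Besov (Gagliardo) seminorm `[f]_{r,p}`. -/
def gagliardo (d : ℕ) (r p : ℝ) {F : Type*} [NormedAddCommGroup F] (f : Ed d → F) : ℝ≥0∞ :=
  (∫⁻ x, ∫⁻ y, (‖f x - f y‖₊ : ℝ≥0∞) ^ p / (‖x - y‖₊ : ℝ≥0∞) ^ (r * p + d)) ^ (1 / p)

/-- The homogeneous Hölder seminorm `{f}_r`. -/
def holderSemi (d : ℕ) (r : ℝ) {F : Type*} [NormedAddCommGroup F] (f : Ed d → F) : ℝ≥0∞ :=
  ⨆ x, ⨆ y, (‖f x - f y‖₊ : ℝ≥0∞) / (‖x - y‖₊ : ℝ≥0∞) ^ r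

/-- The Fourier transform `f̂(κ) = ∫ e^{-i x·κ} f(x) dx`. -/
def ftransform (d : ℕ) (f : Ed d → ℂ) (κ : Ed d) : ℂ :=
  ∫ x, Complex.exp (-(Complex.I * (⟪x, κ⟫ : ℂ))) * f x

/-- The homogeneous Sobolev seminorm `[f]_θ = ((2π)^{-d} ∫ |κ|^{2θ} |f̂(κ)|² dκ)^{1/2}`. -/
def sobolevSemi (d : ℕ) (θ : ℝ) (f : Ed d → ℂ) : ℝ≥0∞ :=
  (ENNReal.ofReal ((2 * Real.pi) ^ (-(d : ℝ))) *
    ∫⁻ κ, (‖κ‖₊ : ℝ≥0∞) ^ (2 * θ) * (‖ftransform d f κ‖₊ : ℝ≥0∞) ^ (2 : ℕ)) ^ ((1 : ℝ) / 2)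

/-- A symbol of class `S⁰_{ph}`: smooth away from the origin and positively
homogeneous of degree `0`. -/
def IsSymbol0 (d : ℕ) (a : Ed d → ℂ) : Prop :=
  ContDiffOn ℝ (⊤ : ℕ∞) a {0}ᶜ ∧ ∀ (c : ℝ) (κ : Ed d), 0 < c → κ ≠ 0 → a (c • κ) = a κ

/-- The operator `𝔞[f](x) = (2π)^{-d} ∫ e^{i x·κ} a(κ) f̂(κ) dκ` associated with a symbol. -/
def symbOp (d : ℕ) (a : Ed d → ℂ) (f : Ed d → ℂ) (x : Ed d) : ℂ :=
  (((2 * Real.pi) ^ (-(d : ℝ)) : ℝ) : ℂ) *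
    ∫ κ, Complex.exp (Complex.I * (⟪x, κ⟫ : ℂ)) * a κ * ftransform d f κ

/-- The partial derivative `∂_i f(x)`. -/
def pd (d : ℕ) (i : Fin d) (f : Ed d → ℝ) (x : Ed d) : ℝ :=
  fderiv ℝ f x (EuclideanSpace.single i 1)

/-- The half-wave propagator `(e^{itD} g)(x) = (2π)^{-d} ∫ e^{i x·κ} e^{i t|κ|} ĝ(κ) dκ`. -/
def halfWave (d : ℕ) (t : ℝ) (g : Ed d → ℂ) (x : Ed d) : ℂ :=
  (((2 * Real.pi) ^ (-(d : ℝ)) : ℝ) : ℂ) *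
    ∫ κ, Complex.exp (Complex.I * ((⟪x, κ⟫ : ℂ) + (t : ℂ) * ((‖κ‖ : ℝ) : ℂ))) *
      ftransform d g κ

end

/-!
Fourier inversion bounds `‖∇v‖_∞` by `2π ∫ |ξ| |v̂(ξ)| dξ`. Cauchy–Schwarz against the weight
`1 + |ξ / R| ^ (2 (θ + 1))`, optimised over the radius `R`, bounds this weighted `L¹` norm by
powers of `‖v̂‖_{L²}` and `‖|ξ| ^ (θ + 1) v̂‖_{L²}`: this is Carlson's inequality, whose constant is
finite because `θ > 1`. Plancherel identifies the first norm with `‖v‖_{L²}`. For the second,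
`div v = 0` says that `v̂(ξ)` is orthogonal to `ξ`, so the planar Lagrange identity gives
`|ω̂(ξ)| = 2π |ξ| |v̂(ξ)|`.
-/

open FourierTransform LineDeriv SchwartzMap Module

section Carlson

lemma rpow_half_sq (y : ℝ≥0∞) : (y ^ (1 / 2 : ℝ)) ^ 2 = y := by
  rw [← ENNReal.rpow_mul_natCast, Nat.cast_ofNat, div_mul_cancel₀ _ two_ne_zero, ENNReal.rpow_one]

lemma sq_lintegral_mul_le_lintegral_div_mul_lintegral {α : Type*} [MeasurableSpace α]
    {ν : Measure α} {f g w : α → ℝ≥0∞} (hf : AEMeasurable f ν) (hg : AEMeasurable g ν)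
    (hw : AEMeasurable w ν) (hw_zero : ∀ x, w x ≠ 0) (hw_top : ∀ x, w x ≠ ⊤) :
    (∫⁻ x, f x * g x ∂ν) ^ 2 ≤ (∫⁻ x, f x ^ 2 / w x ∂ν) * ∫⁻ x, w x * g x ^ 2 ∂ν := by
  have hfactor (x : α) : f x / w x ^ (1 / 2 : ℝ) * (w x ^ (1 / 2 : ℝ) * g x) = f x * g x := by
    rw [← mul_assoc, ENNReal.div_mul_cancel]
    · exact (ENNReal.rpow_pos (pos_iff_ne_zero.2 (hw_zero x)) (hw_top x)).ne'
    · exact ENNReal.rpow_ne_top_of_nonneg (by norm_num) (hw_top x)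
  have hquot (x : α) : (f x / w x ^ (1 / 2 : ℝ)) ^ 2 = f x ^ 2 / w x := by
    rw [div_eq_mul_inv, mul_pow, ← ENNReal.inv_pow, rpow_half_sq, ← div_eq_mul_inv]
  have hholder := ENNReal.lintegral_mul_le_Lp_mul_Lq ν Real.HolderConjugate.two_two
    (hf.div (hw.pow_const (1 / 2 : ℝ))) ((hw.pow_const (1 / 2 : ℝ)).mul hg)
  simp only [Pi.mul_apply, Pi.div_apply, hfactor, ENNReal.rpow_two, hquot, mul_pow,
    rpow_half_sq] at hholder
  simpa only [mul_pow, rpow_half_sq] using pow_le_pow_left₀ zero_le hholder 2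

variable {E : Type*} [NormedAddCommGroup E]

/-- The integral of `‖x‖ ^ (2r) / (1 + ‖x‖ ^ (2p))`, which up to a factor `2` is the constant of
Carlson's inequality `sq_lintegral_enorm_rpow_mul_le`. -/
noncomputable def carlsonIntegral [MeasurableSpace E] (μ : Measure E) (r p : ℝ) : ℝ≥0∞ :=
  ∫⁻ x, (‖x‖ₑ ^ r) ^ 2 / (1 + (‖x‖ₑ ^ p) ^ 2) ∂μ

lemma carlsonIntegral_integrand_le {r p : ℝ} (hr : 0 ≤ r) (hp : 1 ≤ 2 * p) (x : E) :
    (‖x‖ₑ ^ r) ^ 2 / (1 + (‖x‖ₑ ^ p) ^ 2) ≤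
      2 ^ (2 * p - 1) * ENNReal.ofReal ((1 + ‖x‖) ^ (-(2 * p - 2 * r))) := by
  have hu_zero : 1 + ‖x‖ₑ ≠ 0 := by simp
  have hu_top : 1 + ‖x‖ₑ ≠ ⊤ := by simp
  have hofReal : ENNReal.ofReal (1 + ‖x‖) = 1 + ‖x‖ₑ := by
    rw [ENNReal.ofReal_add zero_le_one (norm_nonneg x), ENNReal.ofReal_one, ofReal_norm]
  have hnum : (‖x‖ₑ ^ r) ^ 2 ≤ (1 + ‖x‖ₑ) ^ (2 * r) := by
    rw [← ENNReal.rpow_mul_natCast, Nat.cast_ofNat, mul_comm r]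
    gcongr
    exact le_add_self
  have hden : (1 + ‖x‖ₑ) ^ (2 * p) ≤ 2 ^ (2 * p - 1) * (1 + (‖x‖ₑ ^ p) ^ 2) := by
    rw [← ENNReal.rpow_mul_natCast, Nat.cast_ofNat, mul_comm p]
    simpa only [ENNReal.one_rpow] using ENNReal.rpow_add_le_mul_rpow_add_rpow 1 ‖x‖ₑ hp
  rw [← ENNReal.ofReal_rpow_of_pos (by positivity), hofReal, neg_sub,
    ENNReal.rpow_sub _ _ hu_zero hu_top, ← mul_div_assoc]
  have hden_zero : (1 + ‖x‖ₑ) ^ (2 * p) ≠ 0 :=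
    (ENNReal.rpow_pos (pos_iff_ne_zero.2 hu_zero) hu_top).ne'
  have hden_top : (1 + ‖x‖ₑ) ^ (2 * p) ≠ ⊤ := ENNReal.rpow_ne_top_of_nonneg (by linarith) hu_top
  rw [ENNReal.le_div_iff_mul_le (.inl hden_zero) (.inl hden_top), mul_comm, ← mul_div_assoc]
  refine ENNReal.div_le_of_le_mul ?_
  calc (1 + ‖x‖ₑ) ^ (2 * p) * (‖x‖ₑ ^ r) ^ 2
      ≤ 2 ^ (2 * p - 1) * (1 + (‖x‖ₑ ^ p) ^ 2) * (1 + ‖x‖ₑ) ^ (2 * r) := mul_le_mul' hden hnum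
    _ = 2 ^ (2 * p - 1) * (1 + ‖x‖ₑ) ^ (2 * r) * (1 + (‖x‖ₑ ^ p) ^ 2) := by ring

lemma enorm_rpow_eq_mul_enorm_inv_smul_rpow [NormedSpace ℝ E] {r R : ℝ} (hr : 0 ≤ r)
    (hR : 0 < R) (x : E) :
    ‖x‖ₑ ^ r = ENNReal.ofReal R ^ r * ‖R⁻¹ • x‖ₑ ^ r := by
  rw [← ENNReal.mul_rpow_of_nonneg _ _ hr, ← Real.enorm_of_nonneg hR.le, ← enorm_smul,
    smul_inv_smul₀ hR.ne']

variable [NormedSpace ℝ E] [MeasurableSpace E] [BorelSpace E] {μ : Measure E}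

lemma lintegral_dilated_weight_mul_sq {p R : ℝ} (hp : 0 ≤ p) (hR : 0 < R) {g : E → ℝ≥0∞}
    (hg : AEMeasurable g μ) :
    ∫⁻ x, (1 + (‖R⁻¹ • x‖ₑ ^ p) ^ 2) * g x ^ 2 ∂μ =
      ∫⁻ x, g x ^ 2 ∂μ + ENNReal.ofReal R ^ (-(2 * p)) * ∫⁻ x, (‖x‖ₑ ^ p * g x) ^ 2 ∂μ := by
  have hdilate (x : E) : (1 + (‖R⁻¹ • x‖ₑ ^ p) ^ 2) * g x ^ 2 =
      g x ^ 2 + ENNReal.ofReal R ^ (-(2 * p)) * (‖x‖ₑ ^ p * g x) ^ 2 := by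
    have hcancel : ENNReal.ofReal R ^ (-(2 * p)) * (ENNReal.ofReal R ^ p) ^ 2 = 1 := by
      rw [← ENNReal.rpow_mul_natCast, ← ENNReal.rpow_add _ _ (by simpa) ENNReal.ofReal_ne_top]
      simp [mul_comm]
    rw [enorm_rpow_eq_mul_enorm_inv_smul_rpow hp hR x, add_mul, one_mul]
    calc g x ^ 2 + (‖R⁻¹ • x‖ₑ ^ p) ^ 2 * g x ^ 2
        = g x ^ 2 + ENNReal.ofReal R ^ (-(2 * p)) * (ENNReal.ofReal R ^ p) ^ 2 *
            ((‖R⁻¹ • x‖ₑ ^ p) ^ 2 * g x ^ 2) := by rw [hcancel, one_mul]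
      _ = _ := by ring
  simp only [hdilate]
  rw [lintegral_add_left' (by fun_prop), lintegral_const_mul'' _ (by fun_prop)]

variable [FiniteDimensional ℝ E] [μ.IsAddHaarMeasure]

lemma lintegral_comp_smul (f : E → ℝ≥0∞) {c : ℝ} (hc : 0 < c) :
    ∫⁻ x, f (c • x) ∂μ = ENNReal.ofReal (c ^ finrank ℝ E)⁻¹ * ∫⁻ x, f x ∂μ := by
  have hmap := lintegral_map_equiv (μ := μ) f (MeasurableEquiv.smul₀ c hc.ne')
  rw [MeasurableEquiv.coe_smul₀, Measure.map_addHaar_smul μ hc.ne', lintegral_smul_measure,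
    abs_of_pos (by positivity), smul_eq_mul] at hmap
  exact hmap.symm

lemma carlsonIntegral_ne_zero [Nontrivial E] {r p : ℝ} (hr : 0 ≤ r) (hp : 0 ≤ p) :
    carlsonIntegral μ r p ≠ 0 := by
  intro h
  rw [carlsonIntegral, lintegral_eq_zero_iff (by fun_prop)] at h
  have hfalse : ∀ᵐ _ : E ∂μ, False := by
    filter_upwards [h, Measure.ae_ne μ 0] with x hx hx_ne
    simp [ENNReal.div_eq_zero_iff, ENNReal.rpow_eq_zero_iff, ENNReal.rpow_eq_top_iff, hx_ne,
      hr.not_gt, hp.not_gt] at hx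
  exact hfalse.exists.elim fun _ ↦ id

lemma carlsonIntegral_ne_top [Nontrivial E] {r p : ℝ} (hr : 0 ≤ r)
    (hp : r + finrank ℝ E / 2 < p) : carlsonIntegral μ r p ≠ ⊤ := by
  have hdim : (1 : ℝ) ≤ finrank ℝ E := mod_cast finrank_pos (R := ℝ) (M := E)
  refine ne_top_of_le_ne_top ?_
    (lintegral_mono (carlsonIntegral_integrand_le hr (by linarith)))
  rw [lintegral_const_mul _ (by fun_prop)]
  exact ENNReal.mul_ne_top (ENNReal.rpow_ne_top_of_nonneg (by linarith) (by simp))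
    (finite_integral_one_add_norm (by linarith)).ne

lemma lintegral_dilated_carlsonIntegrand {r R : ℝ} (p : ℝ) (hr : 0 ≤ r) (hR : 0 < R) :
    ∫⁻ x, (‖x‖ₑ ^ r) ^ 2 / (1 + (‖R⁻¹ • x‖ₑ ^ p) ^ 2) ∂μ =
      ENNReal.ofReal R ^ (2 * r + finrank ℝ E) * carlsonIntegral μ r p := by
  have hR_ne : ENNReal.ofReal R ≠ 0 := by simpa using hR
  calc ∫⁻ x, (‖x‖ₑ ^ r) ^ 2 / (1 + (‖R⁻¹ • x‖ₑ ^ p) ^ 2) ∂μ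
      = ∫⁻ x, (ENNReal.ofReal R ^ r) ^ 2 *
          ((‖R⁻¹ • x‖ₑ ^ r) ^ 2 / (1 + (‖R⁻¹ • x‖ₑ ^ p) ^ 2)) ∂μ := by
        refine lintegral_congr fun x ↦ ?_
        rw [enorm_rpow_eq_mul_enorm_inv_smul_rpow hr hR x, mul_pow, mul_div_assoc]
    _ = (ENNReal.ofReal R ^ r) ^ 2 * (ENNReal.ofReal R ^ finrank ℝ E * carlsonIntegral μ r p) := by
        rw [lintegral_const_mul _ (by fun_prop), carlsonIntegral,
          lintegral_comp_smul (fun x : E ↦ (‖x‖ₑ ^ r) ^ 2 / (1 + (‖x‖ₑ ^ p) ^ 2))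
            (inv_pos.2 hR), inv_pow, inv_inv, ENNReal.ofReal_pow hR.le]
    _ = ENNReal.ofReal R ^ (2 * r + finrank ℝ E) * carlsonIntegral μ r p := by
        rw [ENNReal.rpow_add _ _ hR_ne ENNReal.ofReal_ne_top, ENNReal.rpow_natCast,
          ← ENNReal.rpow_mul_natCast, Nat.cast_ofNat, mul_comm r, mul_assoc]

lemma sq_lintegral_enorm_rpow_mul_le_of_dilation {r p R : ℝ} (hr : 0 ≤ r) (hp : 0 ≤ p)
    (hR : 0 < R) {g : E → ℝ≥0∞} (hg : AEMeasurable g μ) :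
    (∫⁻ x, ‖x‖ₑ ^ r * g x ∂μ) ^ 2 ≤
      ENNReal.ofReal R ^ (2 * r + finrank ℝ E) * carlsonIntegral μ r p *
        (∫⁻ x, g x ^ 2 ∂μ +
          ENNReal.ofReal R ^ (-(2 * p)) * ∫⁻ x, (‖x‖ₑ ^ p * g x) ^ 2 ∂μ) := by
  rw [← lintegral_dilated_carlsonIntegrand p hr hR, ← lintegral_dilated_weight_mul_sq hp hR hg]
  refine sq_lintegral_mul_le_lintegral_div_mul_lintegral (by fun_prop) hg (by fun_prop)
    (fun x ↦ by simp) fun x ↦ ?_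
  simp [ENNReal.rpow_eq_top_iff, hp.not_gt]

lemma le_two_mul_rpow_mul_rpow_of_forall_le {N J a b : ℝ≥0∞} {p τ : ℝ} (hp : 0 < p)
    (hτ : 0 ≤ τ) (ha_zero : a ≠ 0) (ha_top : a ≠ ⊤) (hb_zero : b ≠ 0) (hb_top : b ≠ ⊤)
    (h : ∀ t : ℝ≥0∞, t ≠ 0 → t ≠ ⊤ → N ≤ t ^ (2 * p * τ) * J * (a + t ^ (-(2 * p)) * b)) :
    N ≤ 2 * J * a ^ (1 - τ) * b ^ τ := by
  have hratio_zero : b / a ≠ 0 := ENNReal.div_ne_zero.2 ⟨hb_zero, ha_top⟩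
  have hratio_top : b / a ≠ ⊤ := ENNReal.div_ne_top hb_top ha_zero
  -- The two summands balance at `t ^ (2 * p) = b / a`.
  have hbalance : ((b / a) ^ (2 * p)⁻¹) ^ (-(2 * p)) * b = a := by
    rw [← ENNReal.rpow_mul, mul_neg, inv_mul_cancel₀ (by positivity), ENNReal.rpow_neg_one,
      ENNReal.inv_div (.inl ha_top) (.inl ha_zero), ENNReal.div_mul_cancel hb_zero hb_top]
  have hscale : ((b / a) ^ (2 * p)⁻¹) ^ (2 * p * τ) = b ^ τ / a ^ τ := by
    rw [← ENNReal.rpow_mul, inv_mul_cancel_left₀ (by positivity),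
      ENNReal.div_rpow_of_nonneg _ _ hτ]
  calc N ≤ b ^ τ / a ^ τ * J * (a + a) := by
        simpa only [hbalance, hscale] using h ((b / a) ^ (2 * p)⁻¹)
          (ENNReal.rpow_pos (pos_iff_ne_zero.2 hratio_zero) hratio_top).ne'
          (ENNReal.rpow_ne_top_of_nonneg (by positivity) hratio_top)
    _ = 2 * J * a ^ (1 - τ) * b ^ τ := by
        rw [ENNReal.rpow_sub _ _ ha_zero ha_top, ENNReal.rpow_one, div_eq_mul_inv, div_eq_mul_inv]
        ring

lemma ae_eq_zero_of_lintegral_enorm_rpow_mul_sq_eq_zero [Nontrivial E] {p : ℝ} {g : E → ℝ≥0∞}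
    (hg : AEMeasurable g μ) (h : ∫⁻ x, (‖x‖ₑ ^ p * g x) ^ 2 ∂μ = 0) : g =ᵐ[μ] 0 := by
  rw [lintegral_eq_zero_iff' (by fun_prop)] at h
  filter_upwards [h, Measure.ae_ne μ 0] with x hx hx_ne
  simpa [ENNReal.rpow_eq_zero_iff, hx_ne] using hx

theorem sq_lintegral_enorm_rpow_mul_le [Nontrivial E] {r p τ : ℝ} (hr : 0 ≤ r)
    (hp : r + finrank ℝ E / 2 < p) (hτ : p * τ = r + finrank ℝ E / 2) {g : E → ℝ≥0∞}
    (hg : AEMeasurable g μ) :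
    (∫⁻ x, ‖x‖ₑ ^ r * g x ∂μ) ^ 2 ≤ 2 * carlsonIntegral μ r p *
      (∫⁻ x, g x ^ 2 ∂μ) ^ (1 - τ) * (∫⁻ x, (‖x‖ₑ ^ p * g x) ^ 2 ∂μ) ^ τ := by
  have hdim : (0 : ℝ) < finrank ℝ E := mod_cast finrank_pos (R := ℝ) (M := E)
  have hp_pos : 0 < p := by linarith
  have hτ_pos : 0 < τ := pos_of_mul_pos_right (by rw [hτ]; positivity) hp_pos.le
  have hτ_lt : 0 < 1 - τ := by nlinarith
  by_cases hg_zero : g =ᵐ[μ] 0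
  · have hleft : ∫⁻ x, ‖x‖ₑ ^ r * g x ∂μ = 0 :=
      (lintegral_congr_ae (hg_zero.mono fun x hx ↦ by simp [hx])).trans lintegral_zero
    simp [hleft]
  have ha_zero : ∫⁻ x, g x ^ 2 ∂μ ≠ 0 := fun h ↦ hg_zero <|
    ae_eq_zero_of_lintegral_enorm_rpow_mul_sq_eq_zero (p := 0) hg (by simpa using h)
  have hb_zero : ∫⁻ x, (‖x‖ₑ ^ p * g x) ^ 2 ∂μ ≠ 0 :=
    fun h ↦ hg_zero (ae_eq_zero_of_lintegral_enorm_rpow_mul_sq_eq_zero hg h)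
  have hC_zero : 2 * carlsonIntegral μ r p ≠ 0 :=
    mul_ne_zero two_ne_zero (carlsonIntegral_ne_zero hr hp_pos.le)
  by_cases ha_top : ∫⁻ x, g x ^ 2 ∂μ = ⊤
  · simp [ha_top, hτ_lt, hτ_pos.not_gt, hC_zero, hb_zero, ENNReal.mul_top, ENNReal.top_mul,
      ENNReal.rpow_eq_zero_iff]
  by_cases hb_top : ∫⁻ x, (‖x‖ₑ ^ p * g x) ^ 2 ∂μ = ⊤
  · simp [hb_top, hτ_pos, hτ_lt.not_gt, hC_zero, ha_zero, ENNReal.mul_top,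
      ENNReal.rpow_eq_zero_iff]
  refine le_two_mul_rpow_mul_rpow_of_forall_le hp_pos hτ_pos.le ha_zero ha_top hb_zero hb_top
    fun t ht_zero ht_top ↦ ?_
  have hdilation := sq_lintegral_enorm_rpow_mul_le_of_dilation hr hp_pos.le
    (ENNReal.toReal_pos ht_zero ht_top) hg
  rwa [ENNReal.ofReal_toReal ht_top,
    show 2 * r + (finrank ℝ E : ℝ) = 2 * p * τ by linear_combination -2 * hτ] at hdilation

end Carlson

section Fourier

lemma lintegral_enorm_sq {α F : Type*} [MeasurableSpace α] [NormedAddCommGroup F]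
    (ν : Measure α) (f : α → F) : ∫⁻ x, ‖f x‖ₑ ^ 2 ∂ν = eLpNorm f 2 ν ^ 2 := by
  simpa using (eLpNorm_nnreal_pow_eq_lintegral (f := f) (μ := ν) (p := 2) two_ne_zero).symm

variable {E F G : Type*} [NormedAddCommGroup E] [InnerProductSpace ℝ E] [FiniteDimensional ℝ E]
  [MeasurableSpace E] [BorelSpace E]

lemma eLpNorm_fourier_two [NormedAddCommGroup F] [InnerProductSpace ℂ F] [CompleteSpace F]
    (f : 𝓢(E, F)) : eLpNorm (𝓕 f : 𝓢(E, F)) 2 volume = eLpNorm f 2 volume := by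
  have h := SchwartzMap.norm_fourier_toL2_eq f
  rw [SchwartzMap.norm_toLp, SchwartzMap.norm_toLp] at h
  exact (ENNReal.toReal_eq_toReal_iff' ((𝓕 f).memLp 2 volume).2.ne (f.memLp 2 volume).2.ne).1 h

variable [NormedAddCommGroup F] [NormedSpace ℂ F] [NormedAddCommGroup G] [NormedSpace ℂ G]

lemma fourier_postcompCLM [CompleteSpace F] [CompleteSpace G] (L : F →L[ℂ] G) (f : 𝓢(E, F))
    (ξ : E) : 𝓕 (postcompCLM L f) ξ = L (𝓕 f ξ) := by
  rw [fourier_coe, fourier_coe, Real.fourier_eq, Real.fourier_eq, ← L.integral_comp_comm]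
  · simp only [postcompCLM_apply, ContinuousLinearMap.map_smul_of_tower]
  · exact (Real.fourierIntegral_convergent_iff ξ).2 f.integrable

lemma fourier_lineDerivOp_apply (m : E) (f : 𝓢(E, F)) (ξ : E) :
    𝓕 (∂_{m} f) ξ = (2 * Real.pi * Complex.I * ⟪ξ, m⟫ : ℂ) • 𝓕 f ξ := by
  have hm : (inner ℝ · m).HasTemperateGrowth := by fun_prop
  rw [fourier_lineDerivOp_eq, smul_apply, smulLeftCLM_apply_apply hm,
    ← Complex.coe_smul, smul_smul]

variable [CompleteSpace F]

lemma enorm_le_lintegral_enorm_fourier (f : 𝓢(E, F)) (x : E) : ‖f x‖ₑ ≤ ∫⁻ ξ, ‖𝓕 f ξ‖ₑ := by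
  calc ‖f x‖ₑ = ‖𝓕⁻ (𝓕 f) x‖ₑ := by rw [fourierInv_fourier_eq]
    _ ≤ ∫⁻ ξ, ‖𝓕 f ξ‖ₑ := by
      rw [fourierInv_coe, Real.fourierInv_eq]
      refine (enorm_integral_le_lintegral_enorm _).trans_eq (lintegral_congr fun ξ ↦ ?_)
      rw [← ofReal_norm, Circle.norm_smul, ofReal_norm]

lemma enorm_fderiv_le_lintegral_enorm_mul_enorm_fourier (f : 𝓢(E, F)) (x : E) :
    ‖fderiv ℝ f x‖ₑ ≤ ENNReal.ofReal (2 * Real.pi) * ∫⁻ ξ, ‖ξ‖ₑ * ‖𝓕 f ξ‖ₑ := by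
  rw [← lintegral_const_mul _ (by fun_prop), ← fderivCLM_apply ℝ]
  refine (enorm_le_lintegral_enorm_fourier _ x).trans (lintegral_mono fun ξ ↦ ?_)
  rw [fourier_fderivCLM_eq, smul_apply, smulRightCLM_apply_apply, enorm_smul,
    ← ofReal_norm ((innerSL ℝ ξ).smulRight _), ContinuousLinearMap.norm_smulRight_apply,
    innerSL_apply_norm, ENNReal.ofReal_mul (norm_nonneg ξ), ofReal_norm, ofReal_norm,
    ← ofReal_norm]
  simp [abs_of_pos Real.pi_pos]

end Fourier

section Sobolev

variable {d : ℕ}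

lemma ftransform_eq_fourier (f : Ed d → ℂ) (κ : Ed d) :
    ftransform d f κ = 𝓕 f ((2 * Real.pi)⁻¹ • κ) := by
  rw [Real.fourier_eq', ftransform]
  congr! 3 with x
  rw [inner_smul_right]
  push_cast
  field_simp

lemma sobolevSemi_sq {θ : ℝ} (hθ : 0 ≤ θ) (f : Ed d → ℂ) :
    sobolevSemi d θ f ^ 2 =
      ∫⁻ ξ, ((ENNReal.ofReal (2 * Real.pi) * ‖ξ‖ₑ) ^ θ * ‖𝓕 f ξ‖ₑ) ^ 2 := by
  have hpi : 0 < 2 * Real.pi := by positivity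
  have hrescale (κ : Ed d) :
      (‖κ‖₊ : ℝ≥0∞) ^ (2 * θ) * (‖ftransform d f κ‖₊ : ℝ≥0∞) ^ 2 =
        ((ENNReal.ofReal (2 * Real.pi) * ‖(2 * Real.pi)⁻¹ • κ‖ₑ) ^ θ *
          ‖𝓕 f ((2 * Real.pi)⁻¹ • κ)‖ₑ) ^ 2 := by
    rw [ftransform_eq_fourier, ENNReal.mul_rpow_of_nonneg _ _ hθ,
      ← enorm_rpow_eq_mul_enorm_inv_smul_rpow hθ hpi, mul_pow, ← ENNReal.rpow_mul_natCast,
      Nat.cast_ofNat, mul_comm θ, enorm_eq_nnnorm, enorm_eq_nnnorm]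
  have hconst : ENNReal.ofReal ((2 * Real.pi) ^ (-(d : ℝ))) *
      ENNReal.ofReal (((2 * Real.pi)⁻¹ ^ d)⁻¹) = 1 := by
    rw [← ENNReal.ofReal_mul (by positivity), Real.rpow_neg hpi.le, Real.rpow_natCast, inv_pow,
      inv_inv, inv_mul_cancel₀ (by positivity), ENNReal.ofReal_one]
  rw [sobolevSemi, rpow_half_sq, lintegral_congr hrescale,
    lintegral_comp_smul (fun ξ : Ed d ↦
      ((ENNReal.ofReal (2 * Real.pi) * ‖ξ‖ₑ) ^ θ * ‖𝓕 f ξ‖ₑ) ^ 2) (inv_pos.2 hpi),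
    finrank_euclideanSpace_fin, ← mul_assoc, hconst, one_mul]

end Sobolev

section Complexify

variable {d : ℕ}

/-- The inclusion of `ℝ^d` in `ℂ^d`. -/
noncomputable def realToComplex (d : ℕ) : Ed d →ₗᵢ[ℝ] EuclideanSpace ℂ (Fin d) where
  toFun x := WithLp.toLp 2 fun i ↦ (x i : ℂ)
  map_add' x y := by ext; simp
  map_smul' c x := by ext; simp
  norm_map' x := by simp [EuclideanSpace.norm_eq]

/-- A real Schwartz vector field regarded as a complex one, so that Mathlib's Fourier transform
applies to it. -/
noncomputable def complexify (v : 𝓢(Ed d, Ed d)) : 𝓢(Ed d, EuclideanSpace ℂ (Fin d)) :=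
  postcompCLM (realToComplex d).toContinuousLinearMap v

/-- The partial derivative `∂_i v^j` as a complex-valued Schwartz function. -/
noncomputable def complexPartial (i j : Fin d) (v : 𝓢(Ed d, Ed d)) : 𝓢(Ed d, ℂ) :=
  ∂_{(EuclideanSpace.single i 1 : Ed d)}
    (postcompCLM (EuclideanSpace.proj j : EuclideanSpace ℂ (Fin d) →L[ℂ] ℂ) (complexify v))

lemma eLpNorm_complexify (v : 𝓢(Ed d, Ed d)) (p : ℝ≥0∞) :
    eLpNorm (complexify v) p volume = eLpNorm v p volume :=
  eLpNorm_congr_norm_ae (.of_forall fun x ↦ (realToComplex d).norm_map (v x))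

lemma enorm_fderiv_complexify (v : 𝓢(Ed d, Ed d)) (x : Ed d) :
    ‖fderiv ℝ (complexify v) x‖ₑ = ‖fderiv ℝ v x‖ₑ := by
  have h : HasFDerivAt (complexify v)
      ((realToComplex d).toContinuousLinearMap ∘L fderiv ℝ v x) x :=
    (realToComplex d).toContinuousLinearMap.hasFDerivAt.comp x v.differentiableAt.hasFDerivAt
  rw [h.fderiv, ← ofReal_norm, LinearIsometry.norm_toContinuousLinearMap_comp, ofReal_norm]

lemma complexPartial_apply (i j : Fin d) (v : 𝓢(Ed d, Ed d)) (x : Ed d) :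
    complexPartial i j v x = (pd d i (fun y ↦ v y j) x : ℂ) := by
  have h : HasFDerivAt (fun y ↦ v y j)
      ((EuclideanSpace.proj j : Ed d →L[ℝ] ℝ) ∘L fderiv ℝ v x) x :=
    (EuclideanSpace.proj j : Ed d →L[ℝ] ℝ).hasFDerivAt.comp x v.differentiableAt.hasFDerivAt
  rw [complexPartial, lineDerivOp_apply_eq_fderiv, pd, h.fderiv]
  have hC : HasFDerivAt
      (postcompCLM (EuclideanSpace.proj j : EuclideanSpace ℂ (Fin d) →L[ℂ] ℂ) (complexify v))
      (Complex.ofRealCLM ∘L (EuclideanSpace.proj j : Ed d →L[ℝ] ℝ) ∘L fderiv ℝ v x) x :=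
    Complex.ofRealCLM.hasFDerivAt.comp x h
  rw [hC.fderiv]
  rfl

lemma fourier_complexPartial (i j : Fin d) (v : 𝓢(Ed d, Ed d)) (ξ : Ed d) :
    𝓕 (complexPartial i j v) ξ =
      2 * Real.pi * Complex.I * (ξ i * (𝓕 (complexify v) : 𝓢(Ed d, _)) ξ j) := by
  rw [complexPartial, fourier_lineDerivOp_apply, fourier_postcompCLM,
    EuclideanSpace.inner_single_right]
  simp [mul_assoc]

/-- The condition `div v = 0`. -/
def IsDivergenceFree (v : 𝓢(Ed d, Ed d)) : Prop :=
  ∀ x, ∑ i, pd d i (fun y ↦ v y i) x = 0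

lemma IsDivergenceFree.sum_mul_fourier_complexify_eq_zero {v : 𝓢(Ed d, Ed d)}
    (hv : IsDivergenceFree v) (ξ : Ed d) :
    ∑ i, (ξ i : ℂ) * (𝓕 (complexify v) : 𝓢(Ed d, _)) ξ i = 0 := by
  have hdiv : ∑ i, complexPartial i i v = 0 := by
    ext x
    simp only [sum_apply, complexPartial_apply, ← Complex.ofReal_sum, hv x, Complex.ofReal_zero,
      zero_apply]
  have hfourier : ∑ i, 𝓕 (complexPartial i i v) ξ = 0 := by
    rw [← sum_apply, ← fourier_sum, hdiv, FourierTransform.fourier_zero, zero_apply]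
  simp only [fourier_complexPartial, ← Finset.mul_sum] at hfourier
  exact (mul_eq_zero.1 hfourier).resolve_left (by simp [Real.pi_ne_zero])

end Complexify

section Vorticity

lemma norm_sq_mul_norm_sq_eq_norm_dot_sq_add_norm_cross_sq (ξ : Ed 2)
    (z : EuclideanSpace ℂ (Fin 2)) :
    ‖ξ‖ ^ 2 * ‖z‖ ^ 2 =
      ‖(ξ 0 * z 0 + ξ 1 * z 1 : ℂ)‖ ^ 2 + ‖(ξ 0 * z 1 - ξ 1 * z 0 : ℂ)‖ ^ 2 := by
  simp only [EuclideanSpace.norm_sq_eq, Fin.sum_univ_two, Complex.sq_norm, Complex.normSq_apply,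
    Real.norm_eq_abs, sq_abs, Complex.add_re, Complex.add_im, Complex.sub_re, Complex.sub_im,
    Complex.re_ofReal_mul, Complex.im_ofReal_mul]
  ring

/-- The vorticity of a planar vector field as a complex-valued Schwartz function. -/
noncomputable def vorticity (v : 𝓢(Ed 2, Ed 2)) : 𝓢(Ed 2, ℂ) :=
  complexPartial 0 1 v - complexPartial 1 0 v

lemma coe_vorticity (v : 𝓢(Ed 2, Ed 2)) : ⇑(vorticity v) =
    fun x ↦ ((pd 2 0 (fun y ↦ v y 1) x - pd 2 1 (fun y ↦ v y 0) x : ℝ) : ℂ) := by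
  ext x
  rw [vorticity, sub_apply, complexPartial_apply, complexPartial_apply, Complex.ofReal_sub]

variable {v : 𝓢(Ed 2, Ed 2)}

lemma enorm_fourier_vorticity (hv : IsDivergenceFree v) (ξ : Ed 2) :
    ‖𝓕 (vorticity v) ξ‖ₑ = ENNReal.ofReal (2 * Real.pi) * ‖ξ‖ₑ * ‖𝓕 (complexify v) ξ‖ₑ := by
  have hcross : ‖(ξ 0 * (𝓕 (complexify v) : 𝓢(Ed 2, _)) ξ 1 -
      ξ 1 * (𝓕 (complexify v) : 𝓢(Ed 2, _)) ξ 0 : ℂ)‖ = ‖ξ‖ * ‖𝓕 (complexify v) ξ‖ := by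
    refine (pow_left_inj₀ (norm_nonneg _) (by positivity) two_ne_zero).1 ?_
    have horth := hv.sum_mul_fourier_complexify_eq_zero ξ
    rw [Fin.sum_univ_two] at horth
    simp [mul_pow, norm_sq_mul_norm_sq_eq_norm_dot_sq_add_norm_cross_sq, horth]
  have hvort : 𝓕 (vorticity v) ξ = 2 * Real.pi * Complex.I *
      (ξ 0 * (𝓕 (complexify v) : 𝓢(Ed 2, _)) ξ 1 -
        ξ 1 * (𝓕 (complexify v) : 𝓢(Ed 2, _)) ξ 0) := by
    rw [vorticity, sub_eq_add_neg, FourierTransform.fourier_add, FourierTransform.fourier_neg,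
      add_apply, neg_apply, fourier_complexPartial, fourier_complexPartial]
    ring
  rw [hvort, enorm_mul, ← ofReal_norm (_ - _ : ℂ), hcross, ENNReal.ofReal_mul (norm_nonneg ξ),
    ofReal_norm, ofReal_norm, ← mul_assoc, ← ofReal_norm]
  simp [abs_of_pos Real.pi_pos]

lemma lintegral_enorm_rpow_mul_fourier_complexify_sq_le {θ : ℝ} (hθ : 0 ≤ θ)
    (hv : IsDivergenceFree v) :
    ∫⁻ ξ, (‖ξ‖ₑ ^ (θ + 1) * ‖𝓕 (complexify v) ξ‖ₑ) ^ 2 ≤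
      sobolevSemi 2 θ (vorticity v) ^ 2 := by
  have hpi : 1 ≤ ENNReal.ofReal (2 * Real.pi) := by
    rw [ENNReal.one_le_ofReal]
    linarith [Real.pi_gt_three]
  rw [sobolevSemi_sq hθ]
  refine lintegral_mono fun ξ ↦ pow_le_pow_left₀ zero_le ?_ 2
  calc ‖ξ‖ₑ ^ (θ + 1) * ‖𝓕 (complexify v) ξ‖ₑ
      ≤ (ENNReal.ofReal (2 * Real.pi) * ‖ξ‖ₑ) ^ (θ + 1) * ‖𝓕 (complexify v) ξ‖ₑ := by
        gcongr
        exact le_mul_of_one_le_left zero_le hpi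
    _ = (ENNReal.ofReal (2 * Real.pi) * ‖ξ‖ₑ) ^ θ * ‖𝓕 (vorticity v) ξ‖ₑ := by
        rw [enorm_fourier_vorticity hv, ENNReal.rpow_add_of_nonneg _ _ hθ zero_le_one,
          ENNReal.rpow_one, mul_assoc]

lemma lintegral_enorm_mul_enorm_fourier_complexify_le {θ : ℝ} (hθ : 1 < θ)
    (hv : IsDivergenceFree v) :
    ∫⁻ ξ, ‖ξ‖ₑ * ‖𝓕 (complexify v) ξ‖ₑ ≤
      (2 * carlsonIntegral (volume : Measure (Ed 2)) 1 (θ + 1)) ^ (1 / 2 : ℝ) *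
        eLpNorm v 2 volume ^ ((θ - 1) / (θ + 1)) *
          sobolevSemi 2 θ (vorticity v) ^ (2 / (θ + 1)) := by
  have hcarlson := sq_lintegral_enorm_rpow_mul_le (μ := (volume : Measure (Ed 2)))
    (r := 1) (p := θ + 1) (τ := 2 / (θ + 1)) (g := fun ξ ↦ ‖𝓕 (complexify v) ξ‖ₑ)
    zero_le_one (by norm_num; linarith) (by norm_num; field_simp) (by fun_prop)
  have hplancherel : ∫⁻ ξ, ‖𝓕 (complexify v) ξ‖ₑ ^ 2 = eLpNorm v 2 volume ^ 2 := by
    rw [lintegral_enorm_sq, eLpNorm_fourier_two, eLpNorm_complexify]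
  have hexp : 1 - 2 / (θ + 1) = (θ - 1) / (θ + 1) := by field_simp; ring
  have hsq (y : ℝ≥0∞) (s : ℝ) : (y ^ 2) ^ s = (y ^ s) ^ 2 := by
    rw [← ENNReal.rpow_natCast_mul, mul_comm, ENNReal.rpow_mul_natCast]
  simp only [ENNReal.rpow_one, hplancherel, hexp, hsq] at hcarlson
  refine (ENNReal.pow_le_pow_left_iff two_ne_zero).1 (hcarlson.trans ?_)
  rw [mul_pow, mul_pow, ← hsq (sobolevSemi _ _ _), rpow_half_sq]
  gcongr
  exact lintegral_enorm_rpow_mul_fourier_complexify_sq_le (by linarith) hv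

end Vorticity

/-- For a divergence-free Schwartz vector field `v` on `ℝ²` with vorticity
`ω` and `θ > 1`: `‖∇v‖_∞ ≤ C ‖v‖₂^{(θ−1)/(θ+1)} [ω]_θ^{2/(θ+1)}`. -/
theorem stmt11 (θ : ℝ) (hθ : 1 < θ) :
    ∃ C : ℝ, 0 < C ∧ ∀ v : SchwartzMap (Ed 2) (Ed 2),
      (∀ x, pd 2 0 (fun y => v y 0) x + pd 2 1 (fun y => v y 1) x = 0) →
      (⨆ x, (‖fderiv ℝ (⇑v) x‖₊ : ℝ≥0∞))
        ≤ ENNReal.ofReal C * eLpNorm (⇑v) 2 volume ^ ((θ - 1) / (θ + 1)) *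
          sobolevSemi 2 θ
            (fun x => ((pd 2 0 (fun y => v y 1) x - pd 2 1 (fun y => v y 0) x : ℝ) : ℂ))
              ^ (2 / (θ + 1)) := by
  set K := (2 * carlsonIntegral (volume : Measure (Ed 2)) 1 (θ + 1)) ^ (1 / 2 : ℝ)
  have hC_zero : 2 * carlsonIntegral (volume : Measure (Ed 2)) 1 (θ + 1) ≠ 0 :=
    mul_ne_zero two_ne_zero (carlsonIntegral_ne_zero zero_le_one (by linarith))
  have hC_top : 2 * carlsonIntegral (volume : Measure (Ed 2)) 1 (θ + 1) ≠ ⊤ :=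
    ENNReal.mul_ne_top ofNat_ne_top (carlsonIntegral_ne_top zero_le_one (by norm_num; linarith))
  have hK_top : K ≠ ⊤ := ENNReal.rpow_ne_top_of_nonneg (by norm_num) hC_top
  have hK_pos : 0 < K.toReal :=
    ENNReal.toReal_pos (ENNReal.rpow_pos (pos_iff_ne_zero.2 hC_zero) hC_top).ne' hK_top
  refine ⟨2 * Real.pi * K.toReal, by positivity, fun v hv ↦ iSup_le fun x ↦ ?_⟩
  have hdiv : IsDivergenceFree v := fun x ↦ by rw [Fin.sum_univ_two, hv x]
  rw [← enorm_eq_nnnorm, ← enorm_fderiv_complexify, ← coe_vorticity,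
    ENNReal.ofReal_mul (by positivity), ENNReal.ofReal_toReal hK_top, mul_assoc, mul_assoc,
    ← mul_assoc K]
  exact (enorm_fderiv_le_lintegral_enorm_mul_enorm_fourier _ x).trans
    (mul_le_mul_right (lintegral_enorm_mul_enorm_fourier_complexify_le hθ hdiv) _)
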